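/- Let α ≥ 1, β ∈ [0,1], p ∈ (1,∞), and let s be the smallest positive integer with s > α + β − 1. Consider the points a_{k,m} = (1 − 2^{−k})·e^{i m 2^{−k}} for k ∈ ℕ and 1 ≤ m ≤ ⌊2^{kβ}⌋, and define the positive Borel measure λ = ∑_{k≥1} ∑_{m=1}^{⌊2^{kβ}⌋} ⌊2^{αk}⌋ · 2^{−k(s+1)} · δ_{a_{k,m}} on the closed unit disc (where δ_a is the unit Dirac mass at a). Then there exist constants c > 0 and δ₀ > 0 such that for all δ ∈ (0, δ₀): (∫₀^{2π} λ(C(φ,δ))^p dφ)^{1/p} ≥ c · δ^{s+1−α−(β−1)/p}. -/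

import Mathlib

open MeasureTheory Complex
open scoped ENNReal

/-- The Carleson box `C(φ,δ) = {ζ ∈ closure 𝔻 : |ζ| ≥ 1-δ, |arg ζ - φ| ≤ πδ}`
(the angular condition is expressed via a representative `θ` of the argument,
so that it is `2π`-periodic in `φ`). -/
noncomputable def carlesonBox (φ δ : ℝ) : Set ℂ :=
  {ζ : ℂ | ‖ζ‖ ≤ 1 ∧ 1 - δ ≤ ‖ζ‖ ∧
    ∃ θ : ℝ, |θ - φ| ≤ Real.pi * δ ∧
      ζ = (‖ζ‖ : ℂ) * Complex.exp (θ * Complex.I)}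

/-- The points `a_{k,m} = (1-2^{-k})·e^{i·m·2^{-k}}`. -/
noncomputable def aPt (k m : ℕ) : ℂ :=
  ((1 - (2 : ℝ) ^ (-(k : ℝ)) : ℝ) : ℂ) *
    Complex.exp (((m : ℝ) * (2 : ℝ) ^ (-(k : ℝ)) : ℝ) * Complex.I)

-- The measure `λ = ∑_{k≥1} ∑_{m=1}^{⌊2^{kβ}⌋} ⌊2^{αk}⌋·2^{-k(s+1)}·δ_{a_{k,m}}`,
-- as a set function.
open Classical in
noncomputable def exLam (α β : ℝ) (s : ℕ) (M : Set ℂ) : ℝ≥0∞ :=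
  ∑' k : ℕ, ∑' m : ℕ,
    if 1 ≤ k ∧ 1 ≤ m ∧ m ≤ Nat.floor ((2 : ℝ) ^ ((k : ℝ) * β)) ∧ aPt k m ∈ M then
      (Nat.floor ((2 : ℝ) ^ (α * (k : ℝ))) : ℝ≥0∞) *
        ENNReal.ofReal ((2 : ℝ) ^ (-(k : ℝ) * ((s : ℝ) + 1)))
    else 0

/-!
Fix `δ` and let `k` be the first index with `x = 2^{-k} < δ`, so that `δ ≤ 2x`. The angles `m x` of
the points `a_{k,m}` form an `x`-net of the arc `[0, x^{1-β}]`, so for every `φ` in this arc the box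
`C(φ, δ)` contains at least one of these points. Its mass is at least `x^{s+1-α} / 2`, hence the
`L^p` norm of `φ ↦ λ(C(φ, δ))` is at least `(x^{1-β})^{1/p} · x^{s+1-α} / 2`, which is comparable to
`δ^{s+1-α-(β-1)/p}`. Since `α + β - 1 < s`, the total mass of `λ` is bounded by a convergent
geometric series, so `toReal` never turns an infinite `λ(C(φ, δ))` into `0`.
-/

lemma exists_two_rpow_neg_natCast_near {δ : ℝ} (hδ0 : 0 < δ) (hδ1 : δ ≤ 1) :
    ∃ k : ℕ, 1 ≤ k ∧ (2 : ℝ) ^ (-(k : ℝ)) < δ ∧ δ / 2 ≤ (2 : ℝ) ^ (-(k : ℝ)) := by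
  obtain ⟨n, hlt, hle⟩ := exists_nat_pow_near_of_lt_one hδ0 hδ1
    (by norm_num : (0 : ℝ) < 2⁻¹) (by norm_num)
  have hpow : (2 : ℝ) ^ (-((n + 1 : ℕ) : ℝ)) = 2⁻¹ ^ (n + 1) := by
    rw [Real.rpow_neg zero_le_two, Real.rpow_natCast, inv_pow]
  refine ⟨n + 1, n.succ_pos, hpow ▸ hlt, ?_⟩
  rw [hpow, pow_succ]
  linarith

lemma exists_nat_abs_mul_sub_le {x φ L : ℝ} (hx : 0 < x) (hφ : 0 ≤ φ) (hL : 1 ≤ L)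
    (hφL : φ ≤ L * x) : ∃ m : ℕ, 1 ≤ m ∧ m ≤ ⌊L⌋₊ ∧ |m * x - φ| ≤ x := by
  rcases lt_or_ge φ x with hlt | hge
  · refine ⟨1, le_rfl, Nat.le_floor (by simpa using hL), abs_le.2 ?_⟩
    constructor <;> push_cast <;> linarith
  · refine ⟨⌊φ / x⌋₊, Nat.le_floor (by simpa using (one_le_div hx).2 hge),
      Nat.floor_le_floor ((div_le_iff₀ hx).2 hφL), abs_le.2 ?_⟩
    have hfloor_le : ⌊φ / x⌋₊ * x ≤ φ := (le_div_iff₀ hx).1 (Nat.floor_le (by positivity))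
    have hlt_floor : φ < (⌊φ / x⌋₊ + 1) * x := (div_lt_iff₀ hx).1 (Nat.lt_floor_add_one _)
    constructor <;> linarith

lemma rpow_mul_le_rpow_integral_rpow {f : ℝ → ℝ} {a y b C p : ℝ} (hay : a ≤ y) (hyb : y ≤ b)
    (hp : 0 < p) (hC : 0 ≤ C) (hf : ∀ φ, 0 ≤ f φ)
    (hint : IntervalIntegrable (fun φ ↦ f φ ^ p) volume a b) (hCf : ∀ φ ∈ Set.Icc a y, C ≤ f φ) :
    (y - a) ^ (1 / p) * C ≤ (∫ φ in a..b, f φ ^ p) ^ (1 / p) := by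
  have hint_left : IntervalIntegrable (fun φ ↦ f φ ^ p) volume a y :=
    hint.mono_set (Set.uIcc_subset_uIcc_left (Set.mem_uIcc_of_le hay hyb))
  have hpow : (y - a) * C ^ p ≤ ∫ φ in a..b, f φ ^ p := calc
    (y - a) * C ^ p = ∫ _ in a..y, C ^ p := by rw [intervalIntegral.integral_const, smul_eq_mul]
    _ ≤ ∫ φ in a..y, f φ ^ p :=
      intervalIntegral.integral_mono_on hay intervalIntegrable_const hint_left
        fun φ hφ ↦ Real.rpow_le_rpow hC (hCf φ hφ) hp.le
    _ ≤ ∫ φ in a..b, f φ ^ p :=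
      intervalIntegral.integral_mono_interval le_rfl hay hyb
        (ae_of_all _ fun φ ↦ Real.rpow_nonneg (hf φ) p) hint
  have hya : 0 ≤ y - a := sub_nonneg.2 hay
  calc (y - a) ^ (1 / p) * C = ((y - a) * C ^ p) ^ (1 / p) := by
        rw [Real.mul_rpow hya (by positivity), one_div, Real.rpow_rpow_inv hC hp.ne']
    _ ≤ (∫ φ in a..b, f φ ^ p) ^ (1 / p) := by gcongr

lemma two_rpow_neg_natCast_le_one (k : ℕ) : (2 : ℝ) ^ (-(k : ℝ)) ≤ 1 :=
  Real.rpow_le_one_of_one_le_of_nonpos one_le_two (neg_nonpos.2 k.cast_nonneg)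

lemma norm_aPt (k m : ℕ) : ‖aPt k m‖ = 1 - (2 : ℝ) ^ (-(k : ℝ)) := by
  rw [aPt, norm_mul, norm_exp_ofReal_mul_I, mul_one, norm_real,
    Real.norm_of_nonneg (sub_nonneg.2 (two_rpow_neg_natCast_le_one k))]

lemma aPt_mem_carlesonBox {k m : ℕ} {φ δ : ℝ} (hδ : (2 : ℝ) ^ (-(k : ℝ)) ≤ δ)
    (hφ : |m * (2 : ℝ) ^ (-(k : ℝ)) - φ| ≤ Real.pi * δ) : aPt k m ∈ carlesonBox φ δ := by
  have hpos : 0 < (2 : ℝ) ^ (-(k : ℝ)) := by positivity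
  refine ⟨?_, ?_, m * (2 : ℝ) ^ (-(k : ℝ)), hφ, by rw [norm_aPt, aPt]⟩ <;>
    rw [norm_aPt] <;> linarith

open scoped Pointwise in
lemma isClosed_setOf_mem_carlesonBox (ζ : ℂ) (δ : ℝ) : IsClosed {φ | ζ ∈ carlesonBox φ δ} := by
  have hargs : IsClosed {θ : ℝ | ζ = ‖ζ‖ * exp (θ * I)} :=
    isClosed_eq continuous_const (by fun_prop)
  -- The admissible `φ` form the closed `πδ`-neighbourhood of the set of arguments of `ζ`.
  have hsum : {φ | ζ ∈ carlesonBox φ δ} = {_φ | ‖ζ‖ ≤ 1 ∧ 1 - δ ≤ ‖ζ‖} ∩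
      ({θ : ℝ | ζ = ‖ζ‖ * exp (θ * I)} + Metric.closedBall 0 (Real.pi * δ)) := by
    ext φ
    simp only [carlesonBox, Set.mem_ofPred_eq, Set.mem_inter_iff, and_assoc, Set.mem_add,
      mem_closedBall_zero_iff, Real.norm_eq_abs]
    refine and_congr_right fun _ ↦ and_congr_right fun _ ↦ ⟨?_, ?_⟩
    · rintro ⟨θ, hθφ, hθ⟩
      exact ⟨θ, hθ, φ - θ, by rwa [abs_sub_comm], by ring⟩
    · rintro ⟨θ, hθ, t, ht, rfl⟩
      exact ⟨θ, by simpa using ht, hθ⟩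
  rw [hsum]
  exact isClosed_const.inter (hargs.add_right_of_isCompact (isCompact_closedBall 0 _))

/-- The mass `⌊2^{αk}⌋ · 2^{-k(s+1)}` that `λ` puts on each of the points `a_{k,m}`. -/
noncomputable def atomMass (α : ℝ) (s k : ℕ) : ℝ≥0∞ :=
  (⌊(2 : ℝ) ^ (α * (k : ℝ))⌋₊ : ℝ≥0∞) * ENNReal.ofReal ((2 : ℝ) ^ (-(k : ℝ) * ((s : ℝ) + 1)))

lemma natFloor_le_ofReal {y : ℝ} (hy : 0 ≤ y) : (⌊y⌋₊ : ℝ≥0∞) ≤ ENNReal.ofReal y := by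
  rw [← ENNReal.ofReal_natCast]
  exact ENNReal.ofReal_le_ofReal (Nat.floor_le hy)

lemma natFloor_mul_atomMass_le (α β : ℝ) (s k : ℕ) :
    (⌊(2 : ℝ) ^ ((k : ℝ) * β)⌋₊ : ℝ≥0∞) * atomMass α s k ≤
      ENNReal.ofReal ((2 : ℝ) ^ (α + β - 1 - s)) ^ k := calc
  _ ≤ ENNReal.ofReal ((2 : ℝ) ^ ((k : ℝ) * β)) * (ENNReal.ofReal ((2 : ℝ) ^ (α * (k : ℝ))) *
      ENNReal.ofReal ((2 : ℝ) ^ (-(k : ℝ) * ((s : ℝ) + 1)))) := by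
    unfold atomMass
    gcongr <;> exact natFloor_le_ofReal (by positivity)
  _ = ENNReal.ofReal ((2 : ℝ) ^ (α + β - 1 - s)) ^ k := by
    rw [← ENNReal.ofReal_mul (by positivity), ← ENNReal.ofReal_mul (by positivity),
      ← ENNReal.ofReal_pow (by positivity), ← Real.rpow_mul_natCast zero_le_two,
      ← Real.rpow_add two_pos, ← Real.rpow_add two_pos]
    ring_nf

lemma rpow_div_two_le_toReal_atomMass {α : ℝ} (hα : 0 ≤ α) (s k : ℕ) :
    ((2 : ℝ) ^ (-(k : ℝ))) ^ ((s : ℝ) + 1 - α) / 2 ≤ (atomMass α s k).toReal := by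
  have hfloor : (2 : ℝ) ^ (α * (k : ℝ)) / 2 ≤ ⌊(2 : ℝ) ^ (α * (k : ℝ))⌋₊ :=
    (Nat.div_two_lt_floor (Real.one_le_rpow one_le_two (by positivity))).le
  calc ((2 : ℝ) ^ (-(k : ℝ))) ^ ((s : ℝ) + 1 - α) / 2
      = (2 : ℝ) ^ (α * (k : ℝ)) / 2 * (2 : ℝ) ^ (-(k : ℝ) * ((s : ℝ) + 1)) := by
        rw [div_mul_eq_mul_div, ← Real.rpow_add two_pos, ← Real.rpow_mul zero_le_two]
        ring_nf
    _ ≤ ⌊(2 : ℝ) ^ (α * (k : ℝ))⌋₊ * (2 : ℝ) ^ (-(k : ℝ) * ((s : ℝ) + 1)) := by gcongr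
    _ = (atomMass α s k).toReal := by
        rw [atomMass, ENNReal.toReal_mul, ENNReal.toReal_natCast,
          ENNReal.toReal_ofReal (by positivity)]

lemma atomMass_le_exLam (α : ℝ) {β : ℝ} (s : ℕ) {k m : ℕ} {M : Set ℂ} (hk : 1 ≤ k) (hm : 1 ≤ m)
    (hmβ : m ≤ ⌊(2 : ℝ) ^ ((k : ℝ) * β)⌋₊) (hM : aPt k m ∈ M) :
    atomMass α s k ≤ exLam α β s M := by
  refine le_trans ?_ ((ENNReal.le_tsum m).trans (ENNReal.le_tsum k))
  rw [if_pos ⟨hk, hm, hmβ, hM⟩, atomMass]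

lemma exLam_le_inv_one_sub (α β : ℝ) (s : ℕ) (M : Set ℂ) :
    exLam α β s M ≤ (1 - ENNReal.ofReal ((2 : ℝ) ^ (α + β - 1 - s)))⁻¹ := by
  classical
  rw [← ENNReal.tsum_geometric]
  refine ENNReal.tsum_le_tsum fun k ↦ le_trans ?_ (natFloor_mul_atomMass_le α β s k)
  set N := ⌊(2 : ℝ) ^ ((k : ℝ) * β)⌋₊
  calc
    _ ≤ ∑' m : ℕ, if m ∈ Finset.Icc 1 N then atomMass α s k else 0 := by
      refine ENNReal.tsum_le_tsum fun m ↦ ?_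
      split_ifs with hatom hm
      · exact le_rfl
      · exact absurd (Finset.mem_Icc.2 ⟨hatom.2.1, hatom.2.2.1⟩) hm
      all_goals exact zero_le
    _ = ∑ _ ∈ Finset.Icc 1 N, atomMass α s k := by
      rw [tsum_eq_sum fun _ hm ↦ if_neg hm]
      exact Finset.sum_congr rfl fun _ hm ↦ if_pos hm
    _ = N * atomMass α s k := by simp

lemma inv_one_sub_ofReal_two_rpow_ne_top {x : ℝ} (hx : x < 0) :
    (1 - ENNReal.ofReal ((2 : ℝ) ^ x))⁻¹ ≠ ⊤ := by
  rw [ENNReal.inv_ne_top, Ne, tsub_eq_zero_iff_le, not_le, ENNReal.ofReal_lt_one]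
  exact Real.rpow_lt_one_of_one_lt_of_neg one_lt_two hx

lemma measurable_exLam_carlesonBox (α β : ℝ) (s : ℕ) (δ : ℝ) :
    Measurable fun φ ↦ exLam α β s (carlesonBox φ δ) := by
  refine Measurable.tsum fun k ↦ Measurable.tsum fun m ↦
    Measurable.ite ?_ measurable_const measurable_const
  simp only [Set.ofPred_and]
  exact (MeasurableSet.const _).inter <| (MeasurableSet.const _).inter <|
    (MeasurableSet.const _).inter (isClosed_setOf_mem_carlesonBox _ δ).measurableSet

section FiniteMass

variable {α β : ℝ} {s : ℕ}

lemma exLam_ne_top (hs : α + β - 1 < s) (M : Set ℂ) : exLam α β s M ≠ ⊤ :=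
  ne_top_of_le_ne_top (inv_one_sub_ofReal_two_rpow_ne_top (sub_neg.2 hs))
    (exLam_le_inv_one_sub α β s M)

lemma intervalIntegrable_exLam_carlesonBox_rpow {p : ℝ} (hs : α + β - 1 < s) (hp : 0 ≤ p)
    (δ a b : ℝ) :
    IntervalIntegrable (fun φ ↦ (exLam α β s (carlesonBox φ δ)).toReal ^ p) volume a b := by
  refine (intervalIntegrable_const (c :=
    (1 - ENNReal.ofReal ((2 : ℝ) ^ (α + β - 1 - s)))⁻¹.toReal ^ p)).mono_fun
    ((measurable_exLam_carlesonBox α β s δ).ennreal_toReal.pow_const p).aestronglyMeasurable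
    (ae_of_all _ fun φ ↦ ?_)
  beta_reduce
  rw [Real.norm_of_nonneg (by positivity), Real.norm_of_nonneg (by positivity)]
  gcongr
  · exact inv_one_sub_ofReal_two_rpow_ne_top (sub_neg.2 hs)
  · exact exLam_le_inv_one_sub α β s _

lemma rpow_div_two_le_toReal_exLam_carlesonBox {k : ℕ} {δ φ : ℝ} (hα : 0 ≤ α) (hβ : 0 ≤ β)
    (hs : α + β - 1 < s) (hk : 1 ≤ k) (hδ : (2 : ℝ) ^ (-(k : ℝ)) ≤ δ)
    (hφ : φ ∈ Set.Icc 0 (((2 : ℝ) ^ (-(k : ℝ))) ^ (1 - β))) :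
    ((2 : ℝ) ^ (-(k : ℝ))) ^ ((s : ℝ) + 1 - α) / 2 ≤
      (exLam α β s (carlesonBox φ δ)).toReal := by
  have harc : ((2 : ℝ) ^ (-(k : ℝ))) ^ (1 - β) = 2 ^ ((k : ℝ) * β) * 2 ^ (-(k : ℝ)) := by
    rw [← Real.rpow_mul zero_le_two, ← Real.rpow_add two_pos]
    ring_nf
  obtain ⟨m, hm1, hmβ, hmφ⟩ := exists_nat_abs_mul_sub_le (by positivity) hφ.1
    (Real.one_le_rpow one_le_two (by positivity)) (hφ.2.trans_eq harc)
  have hδ0 : 0 ≤ δ := le_trans (by positivity) hδ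
  have hmem : aPt k m ∈ carlesonBox φ δ := aPt_mem_carlesonBox hδ <|
    (hmφ.trans hδ).trans (le_mul_of_one_le_left hδ0 (by linarith [Real.pi_gt_three]))
  exact (rpow_div_two_le_toReal_atomMass hα s k).trans <|
    ENNReal.toReal_mono (exLam_ne_top hs _) (atomMass_le_exLam α s hk hm1 hmβ hmem)

lemma rpow_div_two_le_rpow_integral_exLam_carlesonBox {p : ℝ} {k : ℕ} {δ : ℝ} (hα : 0 ≤ α)
    (hβ0 : 0 ≤ β) (hβ1 : β ≤ 1) (hp : 0 < p) (hs : α + β - 1 < s) (hk : 1 ≤ k)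
    (hδ : (2 : ℝ) ^ (-(k : ℝ)) ≤ δ) :
    ((2 : ℝ) ^ (-(k : ℝ))) ^ ((s : ℝ) + 1 - α - (β - 1) / p) / 2 ≤
      (∫ φ in (0 : ℝ)..(2 * Real.pi), (exLam α β s (carlesonBox φ δ)).toReal ^ p) ^ (1 / p) := by
  have hlower := fun φ ↦ rpow_div_two_le_toReal_exLam_carlesonBox (φ := φ) hα hβ0 hs hk hδ
  have hx1 := two_rpow_neg_natCast_le_one k
  have hx0 : 0 < (2 : ℝ) ^ (-(k : ℝ)) := by positivity
  set x := (2 : ℝ) ^ (-(k : ℝ))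
  have harc : x ^ (1 - β) ≤ 2 * Real.pi :=
    (Real.rpow_le_one hx0.le hx1 (sub_nonneg.2 hβ1)).trans (by linarith [Real.pi_gt_three])
  calc x ^ ((s : ℝ) + 1 - α - (β - 1) / p) / 2
      = (x ^ (1 - β) - 0) ^ (1 / p) * (x ^ ((s : ℝ) + 1 - α) / 2) := by
        rw [sub_zero, ← Real.rpow_mul hx0.le, ← mul_div_assoc, ← Real.rpow_add hx0]
        ring_nf
    _ ≤ _ := rpow_mul_le_rpow_integral_rpow (by positivity) harc hp (by positivity)
        (fun _ ↦ ENNReal.toReal_nonneg) (intervalIntegrable_exLam_carlesonBox_rpow hs hp.le δ _ _)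
        hlower

end FiniteMass

theorem stmt17_general (α β p : ℝ) (hα : 0 ≤ α) (hβ0 : 0 ≤ β) (hβ1 : β ≤ 1) (hp : 0 < p)
    (s : ℕ) (hs : α + β - 1 < (s : ℝ)) :
    ∃ c : ℝ, 0 < c ∧ ∀ δ : ℝ, 0 < δ → δ ≤ 1 →
      c * δ ^ ((s : ℝ) + 1 - α - (β - 1) / p) ≤
        (∫ φ in (0 : ℝ)..(2 * Real.pi), (exLam α β s (carlesonBox φ δ)).toReal ^ p) ^ (1 / p) := by
  have hexp : 0 ≤ (s : ℝ) + 1 - α - (β - 1) / p := by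
    have : (β - 1) / p ≤ 0 := div_nonpos_of_nonpos_of_nonneg (by linarith) hp.le
    linarith
  refine ⟨(1 / 2) ^ ((s : ℝ) + 1 - α - (β - 1) / p) / 2, by positivity, fun δ hδ0 hδ1 ↦ ?_⟩
  obtain ⟨k, hk, hkδ, hδk⟩ := exists_two_rpow_neg_natCast_near hδ0 hδ1
  calc (1 / 2) ^ ((s : ℝ) + 1 - α - (β - 1) / p) / 2 * δ ^ ((s : ℝ) + 1 - α - (β - 1) / p)
      = (δ / 2) ^ ((s : ℝ) + 1 - α - (β - 1) / p) / 2 := by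
        rw [div_mul_eq_mul_div, ← Real.mul_rpow (by norm_num) hδ0.le, one_div_mul_eq_div]
    _ ≤ ((2 : ℝ) ^ (-(k : ℝ))) ^ ((s : ℝ) + 1 - α - (β - 1) / p) / 2 := by gcongr
    _ ≤ _ := rpow_div_two_le_rpow_integral_exLam_carlesonBox hα hβ0 hβ1 hp hs hk hkδ.le

/-- For `α ≥ 1`, `β ∈ [0,1]`, `p ∈ (1,∞)` and `s` the smallest positive
integer with `s > α + β - 1`, the measure `λ` above satisfies
`(∫₀^{2π} λ(C(φ,δ))^p dφ)^{1/p} ≥ c·δ^{s+1-α-(β-1)/p}` for all small `δ > 0`. -/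
theorem stmt17 (α β p : ℝ) (hα : 1 ≤ α) (hβ0 : 0 ≤ β) (hβ1 : β ≤ 1) (hp : 1 < p)
    (s : ℕ) (hs0 : 0 < s) (hsgt : α + β - 1 < (s : ℝ))
    (hsmin : ∀ t : ℕ, 0 < t → α + β - 1 < (t : ℝ) → s ≤ t) :
    ∃ c : ℝ, 0 < c ∧ ∃ δ₀ : ℝ, 0 < δ₀ ∧ ∀ δ : ℝ, 0 < δ → δ < δ₀ →
      c * δ ^ ((s : ℝ) + 1 - α - (β - 1) / p) ≤
        (∫ φ in (0 : ℝ)..(2 * Real.pi), (exLam α β s (carlesonBox φ δ)).toReal ^ p) ^ (1 / p) := by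
  obtain ⟨c, hc, hle⟩ :=
    stmt17_general α β p (zero_le_one.trans hα) hβ0 hβ1 (zero_lt_one.trans hp) s hsgt
  exact ⟨c, hc, 1, one_pos, fun δ hδ0 hδ1 ↦ hle δ hδ0 hδ1.le⟩
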